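/- Let (μ_n) and μ be probability measures on ℝ with Stieltjes transforms f_n and f respectively. If f_n(z) → f(z) for every z in the upper half-plane, then μ_n converges weakly (in distribution) to μ. -/

import Mathlib

open MeasureTheory Complex Filter

open scoped Topology BoundedContinuousFunction

lemma res_sub_ne {z : ℂ} (hz : z.im ≠ 0) (x : ℝ) : (x : ℂ) - z ≠ 0 := by
  intro h
  apply hz
  have := congrArg Complex.im h
  simpa using this

lemma res_norm_le {z : ℂ} (hz : z.im ≠ 0) (x : ℝ) : ‖((x : ℂ) - z)⁻¹‖ ≤ |z.im|⁻¹ := by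
  rw [norm_inv]
  apply inv_anti₀ (abs_pos.2 hz)
  have := Complex.abs_im_le_norm ((x : ℂ) - z)
  simpa using this

/-- The resolvent as a bounded continuous function. -/
noncomputable def res (z : ℂ) (hz : z.im ≠ 0) : ℝ →ᵇ ℂ :=
  BoundedContinuousFunction.ofNormedAddCommGroup (fun x : ℝ => ((x : ℂ) - z)⁻¹)
    (by
      apply Continuous.inv₀ (by fun_prop)
      exact res_sub_ne hz) |z.im|⁻¹ (res_norm_le hz)

@[simp] lemma res_apply (z : ℂ) (hz : z.im ≠ 0) (x : ℝ) : res z hz x = ((x : ℂ) - z)⁻¹ := rfl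

lemma res_norm (z : ℂ) (hz : z.im ≠ 0) : ‖res z hz‖ ≤ |z.im|⁻¹ :=
  BoundedContinuousFunction.norm_ofNormedAddCommGroup_le _ (by positivity) _

lemma res_identity (z w : ℂ) (hz : z.im ≠ 0) (hw : w.im ≠ 0) :
    res w hw - res z hz = (w - z) • (res z hz * res w hw) := by
  ext x
  have h1 := res_sub_ne hz x
  have h2 := res_sub_ne hw x
  simp only [BoundedContinuousFunction.coe_sub, Pi.sub_apply, res_apply,
    BoundedContinuousFunction.coe_smul, BoundedContinuousFunction.coe_mul, Pi.mul_apply,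
    smul_eq_mul]
  field_simp
  ring

/-- Generators. -/
def gens : Set (ℝ →ᵇ ℂ) := {g | g = 1 ∨ ∃ z, ∃ hz : z.im ≠ 0, g = res z hz}

lemma res_mem (z : ℂ) (hz : z.im ≠ 0) : res z hz ∈ Submodule.span ℂ gens :=
  Submodule.subset_span (Or.inr ⟨z, hz, rfl⟩)

lemma res_mul_mem_of_ne (z w : ℂ) (hz : z.im ≠ 0) (hw : w.im ≠ 0) (h : z ≠ w) :
    res z hz * res w hw ∈ Submodule.span ℂ gens := by
  have h1 := res_identity z w hz hw
  have h2 : w - z ≠ 0 := sub_ne_zero.2 h.symm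
  have : res z hz * res w hw = (w - z)⁻¹ • (res w hw - res z hz) := by
    rw [h1, smul_smul, inv_mul_cancel₀ h2, one_smul]
  rw [this]
  exact Submodule.smul_mem _ _ (Submodule.sub_mem _ (res_mem _ _) (res_mem _ _))

lemma res_sq_mem (z : ℂ) (hz : z.im ≠ 0) :
    res z hz * res z hz ∈ closure (Submodule.span ℂ gens : Set (ℝ →ᵇ ℂ)) := by
  have him : ∀ t : ℝ, (z + t).im ≠ 0 := fun t => by simpa using hz
  have hlim : Tendsto (fun t : ℝ => res (z + t) (him t)) (𝓝[≠] 0) (𝓝 (res z hz)) := by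
    rw [tendsto_iff_norm_sub_tendsto_zero]
    have hb : ∀ t : ℝ, ‖res (z + t) (him t) - res z hz‖ ≤ |t| * (|z.im|⁻¹ * |z.im|⁻¹) := by
      intro t
      rw [res_identity, norm_smul]
      have e : ‖z + (t : ℂ) - z‖ = |t| := by simp
      rw [e]
      have h2 := res_norm (z + t) (him t)
      have h1 := res_norm z hz
      simp only [add_im, ofReal_im, add_zero] at h2
      gcongr
      exact (norm_mul_le _ _).trans (by gcongr)
    refine squeeze_zero (fun _ => norm_nonneg _) hb ?_
    have : Tendsto (fun t : ℝ => |t| * (|z.im|⁻¹ * |z.im|⁻¹)) (𝓝 0)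
        (𝓝 (|(0:ℝ)| * (|z.im|⁻¹ * |z.im|⁻¹))) := by
      apply Continuous.tendsto
      fun_prop
    simp only [abs_zero, zero_mul] at this
    exact this.mono_left nhdsWithin_le_nhds
  refine mem_closure_of_tendsto (hlim.const_mul (res z hz)) ?_
  filter_upwards [self_mem_nhdsWithin] with t ht
  apply res_mul_mem_of_ne
  simpa using ht

lemma gens_mul {a b : ℝ →ᵇ ℂ} (ha : a ∈ gens) (hb : b ∈ gens) :
    a * b ∈ closure (Submodule.span ℂ gens : Set (ℝ →ᵇ ℂ)) := by
  rcases ha with rfl | ⟨z, hz, rfl⟩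
  · rw [one_mul]
    exact subset_closure (Submodule.subset_span hb)
  · rcases hb with rfl | ⟨w, hw, rfl⟩
    · rw [mul_one]
      exact subset_closure (res_mem _ _)
    · by_cases h : z = w
      · subst h
        exact res_sq_mem z hz
      · exact subset_closure (res_mul_mem_of_ne _ _ _ _ h)

lemma span_mul {a b : ℝ →ᵇ ℂ} (ha : a ∈ Submodule.span ℂ gens)
    (hb : b ∈ Submodule.span ℂ gens) :
    a * b ∈ (Submodule.span ℂ gens).topologicalClosure := by
  have h : Submodule.span ℂ gens * Submodule.span ℂ gens ≤
      (Submodule.span ℂ gens).topologicalClosure := by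
    rw [Submodule.span_mul_span, Submodule.span_le]
    rintro _ ⟨x, hx, y, hy, rfl⟩
    exact gens_mul hx hy
  exact h (Submodule.mul_mem_mul ha hb)

lemma span_star {a : ℝ →ᵇ ℂ} (ha : a ∈ Submodule.span ℂ gens) :
    star a ∈ Submodule.span ℂ gens := by
  induction ha using Submodule.span_induction with
  | mem x hx =>
    rcases hx with rfl | ⟨z, hz, rfl⟩
    · rw [star_one]
      exact Submodule.subset_span (Or.inl rfl)
    · have hz' : (star z).im ≠ 0 := by simpa using hz
      have : star (res z hz) = res (star z) hz' := by
        ext x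
        simp
      rw [this]
      exact res_mem _ _
  | zero => simp
  | add x y _ _ hx hy => rw [star_add]; exact Submodule.add_mem _ hx hy
  | smul c x _ hx => rw [star_smul]; exact Submodule.smul_mem _ _ hx

/-- Closed span of the resolvents, as a star subalgebra. -/
noncomputable def resAlg : StarSubalgebra ℂ (ℝ →ᵇ ℂ) where
  carrier := closure (Submodule.span ℂ gens : Set (ℝ →ᵇ ℂ))
  mul_mem' := by
    intro a b ha hb
    have := map_mem_closure₂ continuous_mul ha hb
      (u := ((Submodule.span ℂ gens).topologicalClosure : Set (ℝ →ᵇ ℂ)))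
      (fun x hx y hy => span_mul hx hy)
    rwa [Submodule.topologicalClosure_coe, closure_closure] at this
  add_mem' := by
    intro a b ha hb
    exact (Submodule.span ℂ gens).topologicalClosure.add_mem ha hb
  algebraMap_mem' := by
    intro c
    rw [Algebra.algebraMap_eq_smul_one]
    exact subset_closure (Submodule.smul_mem _ _ (Submodule.subset_span (Or.inl rfl)))
  star_mem' := by
    intro a ha
    exact map_mem_closure continuous_star ha fun x hx => span_star hx

lemma mem_resAlg {g : ℝ →ᵇ ℂ} :
    g ∈ resAlg ↔ g ∈ closure (Submodule.span ℂ gens : Set (ℝ →ᵇ ℂ)) := Iff.rfl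

lemma resAlg_sep :
    (resAlg.map (BoundedContinuousFunction.toContinuousMapStarₐ ℂ)).SeparatesPoints := by
  intro x y hxy
  have hI : I.im ≠ 0 := by simp
  have hm : res I hI ∈ resAlg := mem_resAlg.2 (subset_closure (res_mem _ _))
  refine ⟨fun t => res I hI t, ⟨BoundedContinuousFunction.toContinuousMapStarₐ ℂ (res I hI),
    StarSubalgebra.mem_map.2 ⟨res I hI, hm, rfl⟩, rfl⟩, ?_⟩
  intro he
  apply hxy
  simpa using he

lemma conv_res (μn : ℕ → Measure ℝ) (μ : Measure ℝ)
    [∀ n, IsProbabilityMeasure (μn n)] [IsProbabilityMeasure μ]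
    (h : ∀ z : ℂ, 0 < z.im →
      Tendsto (fun n => ∫ lam : ℝ, ((lam : ℂ) - z)⁻¹ ∂(μn n)) atTop
        (nhds (∫ lam : ℝ, ((lam : ℂ) - z)⁻¹ ∂μ)))
    (z : ℂ) (hz : z.im ≠ 0) :
    Tendsto (fun n => ∫ x, res z hz x ∂(μn n)) atTop (𝓝 (∫ x, res z hz x ∂μ)) := by
  rcases lt_or_gt_of_ne hz with h1 | h1
  · have key : ∀ ν : Measure ℝ, ∫ x, res z hz x ∂ν =
        star (∫ x : ℝ, ((x : ℂ) - star z)⁻¹ ∂ν) := by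
      intro ν
      have := integral_conj (μ := ν) (f := fun x : ℝ => ((x : ℂ) - star z)⁻¹)
      refine Eq.trans ?_ this
      simp
    simp only [key]
    exact (continuous_star.tendsto _).comp (h (star z) (by simpa using h1))
  · simpa using h z h1

lemma conv_span (μn : ℕ → Measure ℝ) (μ : Measure ℝ)
    [∀ n, IsProbabilityMeasure (μn n)] [IsProbabilityMeasure μ]
    (h : ∀ z : ℂ, 0 < z.im →
      Tendsto (fun n => ∫ lam : ℝ, ((lam : ℂ) - z)⁻¹ ∂(μn n)) atTop
        (nhds (∫ lam : ℝ, ((lam : ℂ) - z)⁻¹ ∂μ)))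
    {g : ℝ →ᵇ ℂ} (hg : g ∈ Submodule.span ℂ gens) :
    Tendsto (fun n => ∫ x, g x ∂(μn n)) atTop (𝓝 (∫ x, g x ∂μ)) := by
  induction hg using Submodule.span_induction with
  | mem x hx =>
    rcases hx with rfl | ⟨z, hz, rfl⟩
    · simp
    · exact conv_res μn μ h z hz
  | zero => simp
  | add a b _ _ ha hb =>
    have key : ∀ ν : Measure ℝ, IsProbabilityMeasure ν → ∫ x, (a + b) x ∂ν =
        ∫ x, a x ∂ν + ∫ x, b x ∂ν := fun ν _ =>
      integral_add (a.integrable ν) (b.integrable ν)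
    rw [key μ inferInstance]
    simp only [fun n => key (μn n) inferInstance]
    exact ha.add hb
  | smul c a _ ha =>
    have key : ∀ ν : Measure ℝ, ∫ x, (c • a) x ∂ν = c • ∫ x, a x ∂ν := fun ν =>
      integral_smul c _
    simp only [key]
    exact ha.const_smul c

lemma conv_alg (μn : ℕ → Measure ℝ) (μ : Measure ℝ)
    [∀ n, IsProbabilityMeasure (μn n)] [IsProbabilityMeasure μ]
    (h : ∀ z : ℂ, 0 < z.im →
      Tendsto (fun n => ∫ lam : ℝ, ((lam : ℂ) - z)⁻¹ ∂(μn n)) atTop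
        (nhds (∫ lam : ℝ, ((lam : ℂ) - z)⁻¹ ∂μ)))
    {g : ℝ →ᵇ ℂ} (hg : g ∈ resAlg) :
    Tendsto (fun n => ∫ x, g x ∂(μn n)) atTop (𝓝 (∫ x, g x ∂μ)) := by
  rw [mem_resAlg, Metric.mem_closure_iff] at hg
  rw [Metric.tendsto_atTop]
  intro ε hε
  obtain ⟨k, hk, hgk⟩ := hg (ε / 3) (by positivity)
  obtain ⟨N, hN⟩ := Metric.tendsto_atTop.1 (conv_span μn μ h hk) (ε / 3) (by positivity)
  refine ⟨N, fun n hn => ?_⟩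
  have key : ∀ ν : Measure ℝ, IsProbabilityMeasure ν →
      dist (∫ x, g x ∂ν) (∫ x, k x ∂ν) < ε / 3 := by
    intro ν _
    rw [dist_eq_norm, ← integral_sub (g.integrable ν) (k.integrable ν)]
    refine lt_of_le_of_lt ?_ hgk
    rw [dist_eq_norm]
    exact (g - k).norm_integral_le_norm ν
  have h1 := key (μn n) inferInstance
  have h2 := key μ inferInstance
  rw [dist_comm] at h2
  have h3 := hN n hn
  have h4 := dist_triangle4 (∫ x, g x ∂(μn n)) (∫ x, k x ∂(μn n)) (∫ x, k x ∂μ) (∫ x, g x ∂μ)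
  linarith

lemma re_formula (r : ℝ) (hr : 0 < r) (x : ℝ) :
    1 - r * (((x : ℂ) - r * I)⁻¹).im = x ^ 2 / (x ^ 2 + r ^ 2) := by
  have : 0 < x ^ 2 + r ^ 2 := by positivity
  rw [Complex.inv_im]
  simp [Complex.normSq_apply]
  field_simp
  ring

lemma tail_int (ν : Measure ℝ) [IsProbabilityMeasure ν] (r : ℝ) (hr : 0 < r) :
    Integrable (fun x : ℝ => x ^ 2 / (x ^ 2 + r ^ 2)) ν ∧
    ∫ x : ℝ, x ^ 2 / (x ^ 2 + r ^ 2) ∂ν =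
      1 - r * (∫ x : ℝ, ((x : ℂ) - r * I)⁻¹ ∂ν).im := by
  have hz : ((r : ℂ) * I).im ≠ 0 := by simpa using hr.ne'
  have hi : Integrable (fun x : ℝ => ((x : ℂ) - r * I)⁻¹) ν := (res _ hz).integrable ν
  have hi2 : Integrable (fun x : ℝ => (((x : ℂ) - r * I)⁻¹).im) ν := hi.im
  have e : (∫ x : ℝ, ((x : ℂ) - r * I)⁻¹ ∂ν).im = ∫ x : ℝ, (((x : ℂ) - r * I)⁻¹).im ∂ν :=
    (integral_im hi).symm
  simp only [← re_formula r hr]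
  refine ⟨(integrable_const _).sub (hi2.const_mul r), ?_⟩
  rw [integral_sub (integrable_const _) (hi2.const_mul r), integral_const_mul, e]
  simp

lemma tail_le (ν : Measure ℝ) [IsProbabilityMeasure ν] (r : ℝ) (hr : 0 < r) :
    ν {x | r < ‖x‖} ≤
      ENNReal.ofReal (2 * (1 - r * (∫ x : ℝ, ((x : ℂ) - r * I)⁻¹ ∂ν).im)) := by
  obtain ⟨hi, he⟩ := tail_int ν r hr
  rw [← he]
  have h1 : (1 / 2) * ν.real {x : ℝ | 1 / 2 ≤ x ^ 2 / (x ^ 2 + r ^ 2)} ≤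
      ∫ x : ℝ, x ^ 2 / (x ^ 2 + r ^ 2) ∂ν :=
    mul_meas_ge_le_integral_of_nonneg (ae_of_all _ fun x => by positivity) hi _
  have h2 : {x : ℝ | r < ‖x‖} ⊆ {x : ℝ | 1 / 2 ≤ x ^ 2 / (x ^ 2 + r ^ 2)} := by
    intro x hx
    simp only [Set.mem_ofPred_eq, Real.norm_eq_abs] at hx ⊢
    have : r ^ 2 < x ^ 2 := by
      rw [← sq_abs x]
      gcongr
    rw [div_le_div_iff₀ (by norm_num) (by positivity)]
    linarith
  have h3 := measureReal_mono (μ := ν) h2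
  rw [← ofReal_measureReal]
  apply ENNReal.ofReal_le_ofReal
  linarith

lemma tail_tendsto (ν : Measure ℝ) [IsProbabilityMeasure ν] :
    Tendsto (fun r : ℝ => 2 * (1 - r * (∫ x : ℝ, ((x : ℂ) - r * I)⁻¹ ∂ν).im)) atTop (𝓝 0) := by
  have h0 : Tendsto (fun r : ℝ => ∫ x : ℝ, x ^ 2 / (x ^ 2 + r ^ 2) ∂ν) atTop
      (𝓝 (∫ _ : ℝ, (0:ℝ) ∂ν)) := by
    refine tendsto_integral_filter_of_dominated_convergence (fun _ => 1) ?_ ?_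
      (integrable_const _) ?_
    · filter_upwards [eventually_gt_atTop 0] with r hr using (tail_int ν r hr).1.1
    · filter_upwards [eventually_gt_atTop 0] with r hr
      refine ae_of_all _ fun x => ?_
      rw [Real.norm_of_nonneg (by positivity)]
      exact div_le_one_of_le₀ (by nlinarith [sq_nonneg r]) (by positivity)
    · refine ae_of_all _ fun x => ?_
      refine Tendsto.div_atTop tendsto_const_nhds ?_
      exact tendsto_atTop_add_const_left _ _ (tendsto_pow_atTop (by norm_num))
  have h1 := h0.const_mul 2
  simp only [integral_zero, mul_zero] at h1
  refine h1.congr' ?_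
  filter_upwards [eventually_gt_atTop 0] with r hr
  rw [(tail_int ν r hr).2]

theorem stieltjes_convergence_implies_weak_convergence
    (μn : ℕ → Measure ℝ) (μ : Measure ℝ)
    [∀ n, IsProbabilityMeasure (μn n)] [IsProbabilityMeasure μ]
    (h : ∀ z : ℂ, 0 < z.im →
      Tendsto (fun n => ∫ lam : ℝ, ((lam : ℂ) - z)⁻¹ ∂(μn n)) atTop
        (nhds (∫ lam : ℝ, ((lam : ℂ) - z)⁻¹ ∂μ))) :
    ∀ g : BoundedContinuousFunction ℝ ℝ,
      Tendsto (fun n => ∫ x, g x ∂(μn n)) atTop (nhds (∫ x, g x ∂μ)) := by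
  have htight : IsTightMeasureSet (Set.range μn) := by
    apply isTightMeasureSet_range_of_tendsto_limsup_measure_norm_gt
    have hb := (ENNReal.continuous_ofReal.tendsto 0).comp (tail_tendsto μ)
    rw [ENNReal.ofReal_zero] at hb
    refine tendsto_of_tendsto_of_tendsto_of_le_of_le' tendsto_const_nhds hb
      (Eventually.of_forall fun _ => zero_le) ?_
    filter_upwards [eventually_gt_atTop 0] with r hr
    have h1 := h (r * I) (by simpa using hr)
    have h2 := (Complex.continuous_im.tendsto _).comp h1
    have h3 := (ENNReal.continuous_ofReal.tendsto _).comp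
      (((h2.const_mul r).const_sub 1).const_mul 2)
    refine (limsup_le_limsup (Eventually.of_forall fun n => tail_le (μn n) r hr)).trans ?_
    exact h3.limsup_eq.le
  let P : ℕ → ProbabilityMeasure ℝ := fun n => ⟨μn n, inferInstance⟩
  let P0 : ProbabilityMeasure ℝ := ⟨μ, inferInstance⟩
  have hP : Tendsto P atTop (𝓝 P0) := by
    have ht : IsTightMeasureSet {(P n : Measure ℝ) | n} := htight
    have hc : ∀ g ∈ resAlg, Tendsto (fun n => ∫ x, g x ∂(P n : Measure ℝ)) atTop
        (𝓝 (∫ x, g x ∂(P0 : Measure ℝ))) := fun g hg => conv_alg μn μ h hg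
    exact ProbabilityMeasure.tendsto_of_tight_of_separatesPoints ℂ ht resAlg_sep hc
  exact ProbabilityMeasure.tendsto_iff_forall_integral_tendsto.1 hP
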